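/- Let k ≥ 1 and let v_1, …, v_{6k} be the consecutive vertices of a cycle of length 6k (indices modulo 6k). Let i_1 < i_2 < … < i_b be indices in {1, …, 6k} such that for every j the cyclic difference i_{j+1} − i_j is congruent to 0 or 2 modulo 6, and delete from the cycle, for each j, the two cycle edges incident to v_{i_j}. Then the resulting graph, a disjoint union of paths, requires at least 2k − b edge editions and vertex splittings to be transformed into a disjoint union of bicliques. -/

import Mathlib

/- Common framework: bipartite graphs on vertex set `ℕ` with side labels,
   edge editions, vertex splittings, and the bicluster-editing numbers. -/

namespace BCE

/-- A graph on a finite subset of `ℕ` equipped with a labelling of its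
vertices into two sides `A` and `B`. -/
structure BGraph where
  A : Set ℕ
  B : Set ℕ
  finA : A.Finite
  finB : B.Finite
  Adj : ℕ → ℕ → Prop
  symm : ∀ u v, Adj u v → Adj v u

/-- The vertex set of a graph. -/
def verts (G : BGraph) : Set ℕ := G.A ∪ G.B

/-- The open neighbourhood of a vertex. -/
def nbhd (G : BGraph) (v : ℕ) : Set ℕ := {u | G.Adj v u}

/-- `G = (A, B, E)` is bipartite: the sides are disjoint and every edge joins
a vertex of `A` with a vertex of `B`. -/
def Bipartite (G : BGraph) : Prop :=
  Disjoint G.A G.B ∧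
    ∀ u v, G.Adj u v → (u ∈ G.A ∧ v ∈ G.B) ∨ (u ∈ G.B ∧ v ∈ G.A)

/-- A (bipartite) graph is a disjoint union of bicliques iff whenever
`a-b-c-d` is a walk, `a` and `d` are adjacent (equivalently, every connected
component is a complete bipartite graph). -/
def IsBicliqueUnion (G : BGraph) : Prop :=
  ∀ a b c d, G.Adj a b → G.Adj b c → G.Adj c d → G.Adj a d

/-- The editing operations: deletion of an edge, addition of an edge, and
splitting of a vertex `v` into `v` and a fresh vertex `v'` whose
neighbourhoods `N1`, `N2` cover the neighbourhood of `v`. -/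
inductive Op where
  | del : ℕ → ℕ → Op
  | add : ℕ → ℕ → Op
  | split : ℕ → ℕ → Set ℕ → Set ℕ → Op

/-- `op` is a vertex splitting. -/
def IsSplitOp : Op → Prop
  | Op.split _ _ _ _ => True
  | _ => False

/-- `OpStep sA sB op G G'` : performing the single operation `op` on `G`
yields `G'`; vertex splittings are allowed on side `A` (resp. `B`) only if
`sA` (resp. `sB`) is `true`.  A copy created by a splitting is put on the
same side as the split vertex. -/
inductive OpStep (sA sB : Bool) : Op → BGraph → BGraph → Prop where
  | del {G G' : BGraph} {u v : ℕ}
      (h : G.Adj u v) (hA : G'.A = G.A) (hB : G'.B = G.B)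
      (hadj : ∀ x y, G'.Adj x y ↔
        (G.Adj x y ∧ ¬((x = u ∧ y = v) ∨ (x = v ∧ y = u)))) :
      OpStep sA sB (Op.del u v) G G'
  | add {G G' : BGraph} {u v : ℕ}
      (hu : u ∈ G.A) (hv : v ∈ G.B) (h : ¬ G.Adj u v)
      (hA : G'.A = G.A) (hB : G'.B = G.B)
      (hadj : ∀ x y, G'.Adj x y ↔
        (G.Adj x y ∨ (x = u ∧ y = v) ∨ (x = v ∧ y = u))) :
      OpStep sA sB (Op.add u v) G G'
  | split {G G' : BGraph} {v v' : ℕ} {N1 N2 : Set ℕ}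
      (hside : (v ∈ G.A ∧ sA = true) ∨ (v ∈ G.B ∧ sB = true))
      (hfresh : v' ∉ verts G)
      (hcover : N1 ∪ N2 = nbhd G v)
      (hA : v ∈ G.A → G'.A = insert v' G.A ∧ G'.B = G.B)
      (hB : v ∈ G.B → G'.A = G.A ∧ G'.B = insert v' G.B)
      (hadj : ∀ x y, G'.Adj x y ↔
        ((G.Adj x y ∧ x ≠ v ∧ y ≠ v) ∨ (x = v ∧ y ∈ N1) ∨ (y = v ∧ x ∈ N1) ∨
          (x = v' ∧ y ∈ N2) ∨ (y = v' ∧ x ∈ N2))) :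
      OpStep sA sB (Op.split v v' N1 N2) G G'

/-- `ApplySeq sA sB L G G'` : applying the sequence of operations `L`
to `G` yields `G'`. -/
def ApplySeq (sA sB : Bool) : List Op → BGraph → BGraph → Prop
  | [], G, G' => G' = G
  | op :: L, G, G'' => ∃ G', OpStep sA sB op G G' ∧ ApplySeq sA sB L G' G''

/-- The sequence `L` transforms `G` into a disjoint union of bicliques. -/
def Solves (sA sB : Bool) (L : List Op) (G : BGraph) : Prop :=
  ∃ G', ApplySeq sA sB L G G' ∧ IsBicliqueUnion G'

/-- `bcevs G` : the minimum length of a sequence of edge editions and vertex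
splittings transforming `G` into a disjoint union of bicliques. -/
noncomputable def bcevs (G : BGraph) : ℕ :=
  sInf {n | ∃ L, L.length = n ∧ Solves true true L G}

/-- `bceovs G` (that is, `bceovs(G, A)`) : the minimum length of such a
sequence in which vertex splittings are applied only to vertices of the side
`A` (and their copies, which are also on side `A`). -/
noncomputable def bceovs (G : BGraph) : ℕ :=
  sInf {n | ∃ L, L.length = n ∧ Solves true false L G}

/-- The subgraph of `G` induced by `S`. -/
def induce (G : BGraph) (S : Set ℕ) : BGraph where
  A := G.A ∩ S
  B := G.B ∩ S
  finA := G.finA.subset Set.inter_subset_left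
  finB := G.finB.subset Set.inter_subset_left
  Adj := fun u v => G.Adj u v ∧ u ∈ S ∧ v ∈ S
  symm := fun u v h => ⟨G.symm u v h.1, h.2.2, h.2.1⟩

/-- `G` is a tree (as an abstract graph on its vertex set). -/
def IsTreeB (G : BGraph) : Prop :=
  (SimpleGraph.induce (verts G) (SimpleGraph.fromRel G.Adj)).IsTree

/-- `G` is connected. -/
def ConnectedB (G : BGraph) : Prop :=
  (SimpleGraph.induce (verts G) (SimpleGraph.fromRel G.Adj)).Connected

/-- The set `S` induces a biclique in `G`: every vertex of `S` on side `A` is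
adjacent to every vertex of `S` on side `B`. -/
def IsBicliqueOn (G : BGraph) (S : Set ℕ) : Prop :=
  ∀ u ∈ S ∩ G.A, ∀ v ∈ S ∩ G.B, G.Adj u v

/-- The set `S` induces a star in `G`: some centre `c ∈ S` is adjacent to all
other vertices of `S`, and every edge inside `S` uses the centre. -/
def IsStarOn (G : BGraph) (S : Set ℕ) : Prop :=
  ∃ c ∈ S, (∀ v ∈ S, v ≠ c → G.Adj c v) ∧
    (∀ u ∈ S, ∀ v ∈ S, G.Adj u v → u = c ∨ v = c)

/-- An `A`-partitioning cover of `G`: a collection of subsets of `A ∪ B`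
covering all vertices whose traces on `A` form a partition of `A` (every
vertex of `A` lies in a unique member of the collection). -/
def IsAPartCover (G : BGraph) (C : Set (Set ℕ)) : Prop :=
  (∀ X ∈ C, X ⊆ verts G) ∧
  (∀ v ∈ verts G, ∃ X ∈ C, v ∈ X) ∧
  (∀ a ∈ G.A, ∃! X, X ∈ C ∧ a ∈ X)

/-- The cost of an `A`-partitioning cover: each `a ∈ A` lying in the unique
set `X ∈ C` costs `|(B ∩ X) \ N(a)| + |N(a) \ X|`; each `b ∈ B` lying in `j`
members of `C` costs `j - 1`. -/
noncomputable def coverCost (G : BGraph) (C : Set (Set ℕ)) : ℕ :=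
  (∑ᶠ a ∈ G.A, ∑ᶠ X ∈ {X ∈ C | a ∈ X},
      (((G.B ∩ X) \ nbhd G a).ncard + ((nbhd G a) \ X).ncard)) +
  ∑ᶠ b ∈ G.B, ({X ∈ C | b ∈ X}.ncard - 1)

/-- The twin class of a vertex: all vertices of `G` with the same open
neighbourhood. -/
def twinClass (G : BGraph) (v : ℕ) : Set ℕ :=
  {u ∈ verts G | nbhd G u = nbhd G v}

/-- The twin classes of `G`. -/
def twinClasses (G : BGraph) : Set (Set ℕ) :=
  {T | ∃ v ∈ verts G, T = twinClass G v}

/-- A cover is twin-adapted if every member contains each twin class either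
entirely or not at all. -/
def TwinAdapted (G : BGraph) (C : Set (Set ℕ)) : Prop :=
  ∀ T ∈ twinClasses G, ∀ X ∈ C, T ∩ X = ∅ ∨ T ⊆ X

/-- `G` is a cycle with consecutive vertices `p 0, p 1, …, p (m-1)`
(indices modulo `m`), the vertices of even index forming side `A`. -/
def IsCycleWith (G : BGraph) (p : ℕ → ℕ) (m : ℕ) : Prop :=
  (∀ i j, i < m → j < m → p i = p j → i = j) ∧
  G.A = p '' {i | i < m ∧ i % 2 = 0} ∧
  G.B = p '' {i | i < m ∧ i % 2 = 1} ∧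
  (∀ x y, G.Adj x y ↔ ∃ i < m,
    (x = p i ∧ y = p ((i + 1) % m)) ∨ (y = p i ∧ x = p ((i + 1) % m)))

/-- `G` is a path with `l` edges and consecutive vertices `p 0, …, p l`,
the vertices of even index forming side `A`. -/
def IsPathWith (G : BGraph) (p : ℕ → ℕ) (l : ℕ) : Prop :=
  (∀ i j, i ≤ l → j ≤ l → p i = p j → i = j) ∧
  G.A = p '' {i | i ≤ l ∧ i % 2 = 0} ∧
  G.B = p '' {i | i ≤ l ∧ i % 2 = 1} ∧
  (∀ x y, G.Adj x y ↔ ∃ i < l,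
    (x = p i ∧ y = p (i + 1)) ∨ (y = p i ∧ x = p (i + 1)))

end BCE

namespace BCE

/-!
Label every vertex by the vertex of the initial graph from which it stems by splittings. A
quadruple of labels spelled by a walk of length three whose end labels are not joined by any edge
certifies that the graph is not a disjoint union of bicliques, and it survives every operation
except the deletion of one of its three edges, the splitting of one of its two inner vertices and
the addition of an edge between its ends.

Any four consecutive vertices of a cycle form such a quadruple. If some vertices are cut off, pack
edge-disjoint quadruples greedily into each remaining path: every operation destroys at most one of
them, and a gap `d ≢ 1 (mod 3)` between consecutive cut vertices contains at least `d / 3 - 1` of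
them. On the whole cycle an addition may destroy two edge-disjoint quadruples (the hexagon has two
with the same ends), so there one counts all the windows instead: each operation destroys at most
three of them.
-/

section Obstruction

variable {α : Type*} {sA sB : Bool} {H H' : BGraph} {φ : ℕ → α} {l : Fin 4 → α}

/-- The certificate that `H`, with vertices labelled by `φ`, is not a disjoint union of bicliques:
some walk spells the labels `l 0, l 1, l 2, l 3`, but no edge joins the labels `l 0` and `l 3`.
Demanding this of labels instead of vertices makes it robust under vertex splittings. -/
structure Obstructed (H : BGraph) (φ : ℕ → α) (l : Fin 4 → α) : Prop where
  walk : ∃ x y z t, H.Adj x y ∧ H.Adj y z ∧ H.Adj z t ∧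
    φ x = l 0 ∧ φ y = l 1 ∧ φ z = l 2 ∧ φ t = l 3
  noChord : ∀ x y, H.Adj x y → φ x = l 0 → φ y ≠ l 3

/-- The operation may destroy the obstruction `l` in a graph with vertex labels `φ`. -/
def Op.Hits (φ : ℕ → α) : Op → (Fin 4 → α) → Prop
  | .del u v, l =>
    s(l 0, l 1) = s(φ u, φ v) ∨ s(l 1, l 2) = s(φ u, φ v) ∨ s(l 2, l 3) = s(φ u, φ v)
  | .add u v, l => s(l 0, l 3) = s(φ u, φ v)
  | .split v _ _ _, l => l 1 = φ v ∨ l 2 = φ v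

/-- The vertex from which a vertex stems that is present after the operation: a copy created by a
splitting stems from the split vertex, every other vertex from itself. -/
def Op.origin : Op → ℕ → ℕ
  | .split v v' _ _ => Function.update id v' v
  | _ => id

/-- Every edge of `H` has its ends among the vertices of `H`. This makes the fresh vertex of a
splitting an isolated one beforehand. -/
def EdgesInVerts (H : BGraph) : Prop := ∀ x y, H.Adj x y → x ∈ verts H

theorem EdgesInVerts.mono (hv : EdgesInVerts H) (hle : ∀ x y, H'.Adj x y → H.Adj x y)
    (hsub : verts H ⊆ verts H') : EdgesInVerts H' :=
  fun x y hxy => hsub (hv x y (hle x y hxy))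

theorem OpStep.verts_subset {op : Op} (hs : OpStep sA sB op H H') : verts H ⊆ verts H' := by
  cases hs with
  | del _ hA hB => simp only [verts, hA, hB, subset_rfl]
  | add _ _ _ hA hB => simp only [verts, hA, hB, subset_rfl]
  | split hside _ _ hA hB =>
    rcases hside with ⟨hv, -⟩ | ⟨hv, -⟩
    · simp only [verts, hA hv]
      exact Set.union_subset_union_left _ (Set.subset_insert _ _)
    · simp only [verts, hB hv]
      exact Set.union_subset_union_right _ (Set.subset_insert _ _)

theorem OpStep.mem_verts_of_split {v v' : ℕ} {N₁ N₂ : Set ℕ}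
    (hs : OpStep sA sB (.split v v' N₁ N₂) H H') : v' ∈ verts H' := by
  cases hs with
  | split hside _ _ hA hB =>
    rcases hside with ⟨hv, -⟩ | ⟨hv, -⟩
    · exact Or.inl ((hA hv).1 ▸ Set.mem_insert _ _)
    · exact Or.inr ((hB hv).2 ▸ Set.mem_insert _ _)

theorem OpStep.adj_origin_of_split {v v' : ℕ} {N₁ N₂ : Set ℕ}
    (hs : OpStep sA sB (.split v v' N₁ N₂) H H') (hv : EdgesInVerts H) {x y : ℕ}
    (hxy : H'.Adj x y) :
    H.Adj ((Op.split v v' N₁ N₂).origin x) ((Op.split v v' N₁ N₂).origin y) := by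
  cases hs with
  | split _ hfresh hcover _ _ hadj =>
    have adj_of_mem : ∀ z ∈ N₁ ∪ N₂, H.Adj v z := fun z hz => hcover.subset hz
    have ne_fresh : ∀ a b, H.Adj a b → a ≠ v' := fun a b hab h => hfresh (h ▸ hv a b hab)
    have := H.symm
    simp only [Set.mem_union] at adj_of_mem
    simp only [Op.origin, Function.update_apply, id]
    grind

theorem OpStep.exists_adj_of_split {v v' : ℕ} {N₁ N₂ : Set ℕ}
    (hs : OpStep sA sB (.split v v' N₁ N₂) H H') (hv : EdgesInVerts H) {x y : ℕ}
    (hxy : H.Adj x y) (hy : y ≠ v) :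
    ∃ x', (Op.split v v' N₁ N₂).origin x' = x ∧ H'.Adj x' y := by
  cases hs with
  | split _ hfresh hcover _ _ hadj =>
    by_cases hx : x = v
    · subst hx
      rcases hcover.superset hxy with hy₁ | hy₂
      · exact ⟨x, by simp [Op.origin, Function.update_apply], by simp [hadj, hy₁]⟩
      · exact ⟨v', by simp [Op.origin], by simp [hadj, hy₂]⟩
    · have hx' : x ≠ v' := fun h => hfresh (h ▸ hv x y hxy)
      exact ⟨x, by simp [Op.origin, hx'], (hadj x y).2 (Or.inl ⟨hxy, hx, hy⟩)⟩

theorem OpStep.edgesInVerts {op : Op} (hs : OpStep sA sB op H H') (hv : EdgesInVerts H) :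
    EdgesInVerts H' := by
  have hsub := hs.verts_subset
  cases op with
  | del u v =>
    cases hs with
    | del _ _ _ hadj => exact hv.mono (fun x y hxy => ((hadj x y).1 hxy).1) hsub
  | add u v =>
    cases hs with
    | add hu hv' _ _ _ hadj =>
      intro x y hxy
      rcases (hadj x y).1 hxy with hxy | ⟨rfl, -⟩ | ⟨rfl, -⟩
      · exact hsub (hv x y hxy)
      · exact hsub (Or.inl hu)
      · exact hsub (Or.inr hv')
  | split v v' N₁ N₂ =>
    intro x y hxy
    by_cases hx : x = v'
    · exact hx ▸ hs.mem_verts_of_split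
    · have := hv _ _ (hs.adj_origin_of_split hv hxy)
      exact hsub (by simpa [Op.origin, hx] using this)

theorem Obstructed.not_isBicliqueUnion (h : Obstructed H φ l) : ¬ IsBicliqueUnion H := by
  obtain ⟨x, y, z, t, hxy, hyz, hzt, hx, -, -, ht⟩ := h.walk
  exact fun hbic => h.noChord x t (hbic x y z t hxy hyz hzt) hx ht

theorem Obstructed.of_del {u v : ℕ} (h : Obstructed H φ l) (hs : OpStep sA sB (.del u v) H H')
    (hhit : ¬ (Op.del u v).Hits φ l) : Obstructed H' φ l := by
  cases hs with
  | del _ _ _ hadj =>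
    obtain ⟨x, y, z, t, hxy, hyz, hzt, hx, hy, hz, ht⟩ := h.walk
    simp only [Op.Hits, not_or, ← hx, ← hy, ← hz, ← ht] at hhit
    have adj_of_ne : ∀ a b, H.Adj a b → s(φ a, φ b) ≠ s(φ u, φ v) → H'.Adj a b := by
      refine fun a b hab hne => (hadj a b).2 ⟨hab, ?_⟩
      rintro (⟨rfl, rfl⟩ | ⟨rfl, rfl⟩)
      · exact hne rfl
      · exact hne Sym2.eq_swap
    exact ⟨⟨x, y, z, t, adj_of_ne x y hxy hhit.1, adj_of_ne y z hyz hhit.2.1,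
      adj_of_ne z t hzt hhit.2.2, hx, hy, hz, ht⟩,
      fun a b hab => h.noChord a b ((hadj a b).1 hab).1⟩

theorem Obstructed.of_add {u v : ℕ} (h : Obstructed H φ l) (hs : OpStep sA sB (.add u v) H H')
    (hhit : ¬ (Op.add u v).Hits φ l) : Obstructed H' φ l := by
  cases hs with
  | add _ _ _ _ _ hadj =>
    have hle : ∀ a b, H.Adj a b → H'.Adj a b := fun a b hab => (hadj a b).2 (Or.inl hab)
    obtain ⟨x, y, z, t, hxy, hyz, hzt, hlabels⟩ := h.walk
    refine ⟨⟨x, y, z, t, hle x y hxy, hle y z hyz, hle z t hzt, hlabels⟩, fun a b hab ha hb => ?_⟩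
    rcases (hadj a b).1 hab with hab | ⟨rfl, rfl⟩ | ⟨rfl, rfl⟩
    · exact h.noChord a b hab ha hb
    · exact hhit (by rw [Op.Hits, ha, hb])
    · exact hhit (by rw [Op.Hits, ha, hb, Sym2.eq_swap])

theorem Obstructed.of_split {v v' : ℕ} {N₁ N₂ : Set ℕ} (h : Obstructed H φ l)
    (hs : OpStep sA sB (.split v v' N₁ N₂) H H') (hv : EdgesInVerts H)
    (hhit : ¬ (Op.split v v' N₁ N₂).Hits φ l) :
    Obstructed H' (φ ∘ (Op.split v v' N₁ N₂).origin) l := by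
  refine ⟨?_, fun a b hab => h.noChord _ _ (hs.adj_origin_of_split hv hab)⟩
  obtain ⟨x, y, z, t, hxy, hyz, hzt, hx, hy, hz, ht⟩ := h.walk
  simp only [Op.Hits, not_or, ← hy, ← hz] at hhit
  have hyv : y ≠ v := fun h => hhit.1 (congrArg φ h)
  have hzv : z ≠ v := fun h => hhit.2 (congrArg φ h)
  obtain ⟨x', rfl, hxy'⟩ := hs.exists_adj_of_split hv hxy hyv
  obtain ⟨t', rfl, htz'⟩ := hs.exists_adj_of_split hv (H.symm z t hzt) hzv
  cases hs with
  | split _ hfresh _ _ _ hadj =>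
    have hyv' : y ≠ v' := fun h => hfresh (h ▸ hv y z hyz)
    have hzv' : z ≠ v' := fun h => hfresh (h ▸ hv z y (H.symm y z hyz))
    exact ⟨x', y, z, t', hxy', (hadj y z).2 (Or.inl ⟨hyz, hyv, hzv⟩), H'.symm t' z htz', hx,
      by simpa [Op.origin, hyv'] using hy, by simpa [Op.origin, hzv'] using hz, ht⟩

theorem Obstructed.of_opStep {op : Op} (h : Obstructed H φ l) (hs : OpStep sA sB op H H')
    (hv : EdgesInVerts H) (hhit : ¬ op.Hits φ l) : Obstructed H' (φ ∘ op.origin) l := by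
  cases op with
  | del u v => exact h.of_del hs hhit
  | add u v => exact h.of_add hs hhit
  | split v v' N₁ N₂ => exact h.of_split hs hv hhit

open Classical in
theorem card_le_mul_length_of_solves {ι : Type*} (l : ι → Fin 4 → α) (c : ℕ) (F : Finset ι)
    (L : List Op) (hv : EdgesInVerts H) (hobs : ∀ i ∈ F, Obstructed H φ (l i))
    (hhit : ∀ (ψ : ℕ → α) (op : Op), {i ∈ F | op.Hits ψ (l i)}.card ≤ c)
    (hL : Solves sA sB L H) : F.card ≤ c * L.length := by
  induction L generalizing H φ F with
  | nil =>
    obtain ⟨_, rfl, hbic⟩ := hL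
    have : F = ∅ := Finset.eq_empty_of_forall_notMem
      fun i hi => (hobs i hi).not_isBicliqueUnion hbic
    simp [this]
  | cons op L ih =>
    obtain ⟨H'', ⟨H', hstep, hrest⟩, hbic⟩ := hL
    have hsurvivors : {i ∈ F | ¬ op.Hits φ (l i)}.card ≤ c * L.length := by
      refine ih (φ := φ ∘ op.origin) _ (hstep.edgesInVerts hv) (fun i hi => ?_)
        (fun ψ op' => ?_) ⟨H'', hrest, hbic⟩
      · obtain ⟨hiF, hi⟩ := Finset.mem_filter.1 hi
        exact (hobs i hiF).of_opStep hstep hv hi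
      · exact (Finset.card_le_card (Finset.filter_subset_filter _ (Finset.filter_subset _ _))).trans
          (hhit ψ op')
    calc F.card = {i ∈ F | op.Hits φ (l i)}.card + {i ∈ F | ¬ op.Hits φ (l i)}.card :=
          (Finset.card_filter_add_card_filter_not _).symm
      _ ≤ c + c * L.length := Nat.add_le_add (hhit φ op) hsurvivors
      _ = c * (op :: L).length := by rw [List.length_cons, Nat.mul_succ, Nat.add_comm]

end Obstruction

section Window

variable {R : Type*} [CommRing R]

/-- The labels of four consecutive vertices, starting from `s`, on a cycle labelled by `R`; for the
cycle of length `m` one takes `R = ZMod m`. -/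
def window (s : R) : Fin 4 → R := ![s, s + 1, s + 2, s + 3]

theorem Op.exists_forall_hits_window_imp (h2 : (2 : R) ≠ 0) (φ : ℕ → R) (op : Op) :
    (∃ x, ∀ s, op.Hits φ (window s) → ∃ i < 3, s = x + (i : ℕ)) ∨
      (6 : R) = 0 ∧ ∃ x y, ∀ s, op.Hits φ (window s) → s = x ∨ s = y := by
  cases op with
  | del u v =>
    left
    simp only [Op.Hits, window, Matrix.cons_val, Sym2.eq_iff]
    -- As `2 ≠ 0`, at most one of the two ends of the deleted edge is followed by the other.
    obtain ⟨a, ha⟩ : ∃ a, ∀ r, φ u = r ∧ φ v = r + 1 ∨ φ v = r ∧ φ u = r + 1 → r = a := by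
      by_cases huv : φ v = φ u + 1
      · exact ⟨φ u, by grind⟩
      · exact ⟨φ v, by grind⟩
    refine ⟨a - 2, fun s hs => ?_⟩
    rcases hs with hs | hs | hs
    · exact ⟨2, by simp, by have := ha s (by grind); grind⟩
    · exact ⟨1, by simp, by have := ha (s + 1) (by grind); grind⟩
    · exact ⟨0, by simp, by have := ha (s + 2) (by grind); grind⟩
  | add u v =>
    simp only [Op.Hits, window, Matrix.cons_val, Sym2.eq_iff]
    by_cases h6 : (6 : R) = 0
    · exact Or.inr ⟨h6, φ u, φ v, fun s hs => hs.imp And.left And.left⟩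
    · left
      by_cases huv : φ v = φ u + 3
      · exact ⟨φ u, fun s hs => ⟨0, by simp, by grind⟩⟩
      · exact ⟨φ v, fun s hs => ⟨0, by simp, by grind⟩⟩
  | split v v' N₁ N₂ =>
    left
    simp only [Op.Hits, window, Matrix.cons_val]
    refine ⟨φ v - 2, fun s hs => ?_⟩
    rcases hs with hs | hs
    · exact ⟨1, by simp, by grind⟩
    · exact ⟨0, by simp, by grind⟩

open Classical in
theorem Op.card_filter_hits_window_le_three (h2 : (2 : R) ≠ 0) (F : Finset R) (φ : ℕ → R)
    (op : Op) : {s ∈ F | op.Hits φ (window s)}.card ≤ 3 := by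
  rcases op.exists_forall_hits_window_imp h2 φ with ⟨x, hx⟩ | ⟨-, x, y, hxy⟩
  · have hsub : {s ∈ F | op.Hits φ (window s)} ⊆
        (Finset.range 3).image fun i : ℕ => x + (i : R) := by
      intro s hs
      obtain ⟨i, hi, rfl⟩ := hx s (Finset.mem_filter.1 hs).2
      exact Finset.mem_image.2 ⟨i, Finset.mem_range.2 hi, rfl⟩
    exact (Finset.card_le_card hsub).trans Finset.card_image_le
  · have hsub : {s ∈ F | op.Hits φ (window s)} ⊆ {x, y} := by
      intro s hs
      simpa using hxy s (Finset.mem_filter.1 hs).2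
    exact (Finset.card_le_card hsub).trans (Finset.card_le_two.trans (by simp))

end Window

section Packing

/-- The windows `s, s + 1, s + 2, s + 3` with `s ∈ P` lie strictly between `a` and `c` and share no
edges. -/
structure IsWindowPacking (a c : ℕ) (P : Finset ℕ) : Prop where
  lt_start : ∀ s ∈ P, a < s
  end_lt : ∀ s ∈ P, s + 3 < c
  separated : ∀ s ∈ P, ∀ t ∈ P, s < t → s + 3 ≤ t

theorem isWindowPacking_empty (a c : ℕ) : IsWindowPacking a c ∅ := by
  constructor <;> simp

theorem IsWindowPacking.union {a c d : ℕ} {P Q : Finset ℕ} (hP : IsWindowPacking a c P)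
    (hQ : IsWindowPacking c d Q) (hac : a ≤ c) (hcd : c ≤ d) : IsWindowPacking a d (P ∪ Q) := by
  have := hP.lt_start
  have := hP.end_lt
  have := hP.separated
  have := hQ.lt_start
  have := hQ.end_lt
  have := hQ.separated
  constructor <;> grind

theorem IsWindowPacking.card_union {a c d : ℕ} {P Q : Finset ℕ} (hP : IsWindowPacking a c P)
    (hQ : IsWindowPacking c d Q) : (P ∪ Q).card = P.card + Q.card :=
  Finset.card_union_of_disjoint <| Finset.disjoint_left.2 fun s hsP hsQ => by
    have := hP.end_lt s hsP
    have := hQ.lt_start s hsQ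
    omega

theorem exists_isWindowPacking_of_gap {a c : ℕ} (hgap : (c - a) % 3 ≠ 1) :
    ∃ P, IsWindowPacking a c P ∧ c ≤ a + 3 * (P.card + 1) := by
  have hinj : Function.Injective fun t => a + 1 + 3 * t := fun t t' h => by simpa using h
  have mem_iff : ∀ s, s ∈ (Finset.range ((c - a - 2) / 3)).map ⟨_, hinj⟩ ↔
      ∃ t < (c - a - 2) / 3, a + 1 + 3 * t = s := by simp
  refine ⟨(Finset.range ((c - a - 2) / 3)).map ⟨_, hinj⟩, ⟨?_, ?_, ?_⟩, ?_⟩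
  · grind
  · grind
  · grind
  · rw [Finset.card_map, Finset.card_range]
    omega

theorem exists_isWindowPacking_of_gaps {f : ℕ → ℕ} {b : ℕ} (hf : MonotoneOn f (Set.Iic b))
    (hgap : ∀ j < b, (f (j + 1) - f j) % 3 ≠ 1) :
    ∃ P, IsWindowPacking (f 0) (f b) P ∧ f b ≤ f 0 + 3 * (P.card + b) ∧
      ∀ s ∈ P, ∀ j < b, f j < s ∨ s + 3 < f j := by
  induction b with
  | zero => exact ⟨∅, isWindowPacking_empty _ _, by simp, by simp⟩
  | succ b ih =>
    obtain ⟨P, hP, hPcard, hPavoid⟩ :=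
      ih (hf.mono (Set.Iic_subset_Iic.2 b.le_succ)) fun j hj => hgap j (by omega)
    obtain ⟨Q, hQ, hQcard⟩ := exists_isWindowPacking_of_gap (hgap b b.lt_succ_self)
    have hle : ∀ i j, i ≤ j → j ≤ b + 1 → f i ≤ f j := fun i j hij hj =>
      hf (Set.mem_Iic.2 (hij.trans hj)) (Set.mem_Iic.2 hj) hij
    refine ⟨P ∪ Q, hP.union hQ (hle 0 b b.zero_le b.le_succ) (hle b _ b.le_succ le_rfl), ?_, ?_⟩
    · rw [hP.card_union hQ]
      omega
    · intro s hs j hj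
      rcases Finset.mem_union.1 hs with hs | hs
      · rcases Nat.lt_succ_iff_lt_or_eq.1 hj with hj | rfl
        · exact hPavoid s hs j hj
        · exact Or.inr (hP.end_lt s hs)
      · exact Or.inl ((hle j b (by omega) b.le_succ).trans_lt (hQ.lt_start s hs))

end Packing

section Cycle

variable {G G' : BGraph} {p : ℕ → ℕ} {m : ℕ}

/-- The label of a vertex of the cycle `p 0, …, p (m - 1)`: its index, read modulo `m`. Vertices
outside the cycle get junk labels. -/
noncomputable def cycleLabel (p : ℕ → ℕ) (m x : ℕ) : ZMod m :=
  (Function.invFunOn p (Set.Iio m) x : ℕ)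

theorem IsCycleWith.cycleLabel_apply (h : IsCycleWith G p m) {n : ℕ} (hn : n < m) :
    cycleLabel p m (p n) = n := by
  have hinj : Set.InjOn p (Set.Iio m) := fun i hi j hj hij => h.1 i j hi hj hij
  rw [cycleLabel, hinj.leftInvOn_invFunOn hn]

theorem IsCycleWith.cycleLabel_apply_mod (h : IsCycleWith G p m) (hm : 0 < m) (n : ℕ) :
    cycleLabel p m (p (n % m)) = n := by
  rw [h.cycleLabel_apply (Nat.mod_lt n hm), ZMod.natCast_mod]

theorem IsCycleWith.cycleLabel_of_adj (h : IsCycleWith G p m) {x y : ℕ} (hxy : G.Adj x y) :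
    cycleLabel p m y = cycleLabel p m x + 1 ∨ cycleLabel p m x = cycleLabel p m y + 1 := by
  obtain ⟨i, hi, ⟨rfl, rfl⟩ | ⟨rfl, rfl⟩⟩ := (h.2.2.2 x y).1 hxy
  · left
    rw [h.cycleLabel_apply_mod (by omega), h.cycleLabel_apply hi, Nat.cast_succ]
  · right
    rw [h.cycleLabel_apply_mod (by omega), h.cycleLabel_apply hi, Nat.cast_succ]

theorem IsCycleWith.adj_succ (h : IsCycleWith G p m) (hm : 0 < m) (n : ℕ) :
    G.Adj (p (n % m)) (p ((n + 1) % m)) :=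
  (h.2.2.2 _ _).2 ⟨n % m, Nat.mod_lt n hm, Or.inl ⟨rfl, by rw [Nat.mod_add_mod]⟩⟩

theorem IsCycleWith.edgesInVerts (h : IsCycleWith G p m) : EdgesInVerts G := by
  have mem_verts : ∀ i < m, p i ∈ verts G := by
    intro i hi
    rcases Nat.mod_two_eq_zero_or_one i with h0 | h1
    · exact Or.inl (h.2.1 ▸ ⟨i, ⟨hi, h0⟩, rfl⟩)
    · exact Or.inr (h.2.2.1 ▸ ⟨i, ⟨hi, h1⟩, rfl⟩)
  intro x y hxy
  obtain ⟨i, hi, ⟨rfl, -⟩ | ⟨-, rfl⟩⟩ := (h.2.2.2 x y).1 hxy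
  · exact mem_verts i hi
  · exact mem_verts _ (Nat.mod_lt _ (by omega))

theorem natCast_zmod_ne_zero {n : ℕ} (hn : 0 < n) (hnm : n < m) : (n : ZMod m) ≠ 0 :=
  fun h => Nat.not_dvd_of_pos_of_lt hn hnm ((ZMod.natCast_eq_zero_iff n m).1 h)

theorem IsCycleWith.obstructed_window (h : IsCycleWith G p m) (hm : 4 < m)
    (hle : ∀ x y, G'.Adj x y → G.Adj x y) (n : ℕ)
    (hwalk : ∀ i < 3, G'.Adj (p ((n + i) % m)) (p ((n + i + 1) % m))) :
    Obstructed G' (cycleLabel p m) (window (n : ZMod m)) := by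
  have label (i : ℕ) : cycleLabel p m (p ((n + i) % m)) = n + i := by
    rw [h.cycleLabel_apply_mod (by omega), Nat.cast_add]
  refine ⟨⟨p ((n + 0) % m), p ((n + 1) % m), p ((n + 2) % m), p ((n + 3) % m), hwalk 0 (by simp),
    hwalk 1 (by simp), hwalk 2 (by simp), ?_, ?_, ?_, ?_⟩, fun x y hxy hx hy => ?_⟩
  · simpa [window] using label 0
  · simpa [window] using label 1
  · simpa [window] using label 2
  · simpa [window] using label 3
  · have h2 : ((2 : ℕ) : ZMod m) ≠ 0 := natCast_zmod_ne_zero two_pos (by omega)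
    have h4 : ((4 : ℕ) : ZMod m) ≠ 0 := natCast_zmod_ne_zero four_pos hm
    have hstep := h.cycleLabel_of_adj (hle x y hxy)
    simp only [window, Matrix.cons_val] at hx hy
    grind

theorem IsCycleWith.length_le_of_solves (h : IsCycleWith G p m) (hm : 4 < m) {sA sB : Bool}
    {L : List Op} (hL : Solves sA sB L G) : m ≤ 3 * L.length := by
  have : NeZero m := ⟨by omega⟩
  have h2 : ((2 : ℕ) : ZMod m) ≠ 0 := natCast_zmod_ne_zero two_pos (by omega)
  have hobs : ∀ s : ZMod m, Obstructed G (cycleLabel p m) (window s) := by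
    intro s
    obtain ⟨n, rfl⟩ := ZMod.natCast_zmod_surjective s
    exact h.obstructed_window hm (fun _ _ hxy => hxy) n fun i _ => h.adj_succ (by omega) (n + i)
  simpa [ZMod.card] using card_le_mul_length_of_solves window 3 Finset.univ L h.edgesInVerts
    (fun s _ => hobs s) (Op.card_filter_hits_window_le_three (mod_cast h2) Finset.univ) hL

theorem Op.not_hits_window_of_hits {s t : ℕ} {φ : ℕ → ZMod m} {op : Op} (hm : 4 < m)
    (hs : op.Hits φ (window (s : ZMod m))) (hst : s + 3 ≤ t) (htm : t + 3 < s + m) :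
    ¬ op.Hits φ (window (t : ZMod m)) := by
  intro ht
  have h2 : ((2 : ℕ) : ZMod m) ≠ 0 := natCast_zmod_ne_zero two_pos (by omega)
  rcases op.exists_forall_hits_window_imp (mod_cast h2) φ with ⟨x, hx⟩ | ⟨h6, -⟩
  · obtain ⟨i, hi, hsi⟩ := hx _ hs
    obtain ⟨j, hj, htj⟩ := hx _ ht
    have hcast : ((s + j : ℕ) : ZMod m) = (t + i : ℕ) := by
      push_cast
      rw [hsi, htj]
      ring
    have := ((ZMod.natCast_eq_natCast_iff _ _ _).1 hcast).eq_of_abs_lt (by grind)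
    omega
  · have : m ∣ 6 := (ZMod.natCast_eq_zero_iff 6 m).1 (mod_cast h6)
    have := Nat.le_of_dvd (by simp) this
    omega

theorem IsCycleWith.card_packing_le_length_of_solves (h : IsCycleWith G p m) (hm : 4 < m)
    {n : ℕ} {P : Finset ℕ} (hP : IsWindowPacking n (n + m) P) (hv : EdgesInVerts G')
    (hle : ∀ x y, G'.Adj x y → G.Adj x y)
    (hwalk : ∀ s ∈ P, ∀ i < 3, G'.Adj (p ((s + i) % m)) (p ((s + i + 1) % m)))
    {sA sB : Bool} {L : List Op} (hL : Solves sA sB L G') : P.card ≤ L.length := by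
  classical
  rw [← Nat.one_mul L.length]
  refine card_le_mul_length_of_solves (fun s : ℕ => window (s : ZMod m)) 1 P L hv
    (fun s hs => h.obstructed_window hm hle s (hwalk s hs)) (fun ψ op => ?_) hL
  have not_lt_of_hits : ∀ s ∈ P, ∀ t ∈ P, op.Hits ψ (window (s : ZMod m)) →
      op.Hits ψ (window (t : ZMod m)) → ¬ s < t := by
    intro s hs t ht hits hitt hst
    have := hP.lt_start s hs
    have := hP.end_lt t ht
    exact op.not_hits_window_of_hits hm hits (hP.separated s hs t ht hst) (by omega) hitt
  refine Finset.card_le_one.2 fun s hs t ht => ?_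
  obtain ⟨hs, hits⟩ := Finset.mem_filter.1 hs
  obtain ⟨ht, hitt⟩ := Finset.mem_filter.1 ht
  exact le_antisymm (not_lt.1 (not_lt_of_hits t ht s hs hitt hits))
    (not_lt.1 (not_lt_of_hits s hs t ht hits hitt))

theorem IsCycleWith.eq_of_apply_mod_eq (h : IsCycleWith G p m) {n x y : ℕ} (hx : n ≤ x)
    (hxm : x < n + m) (hy : n ≤ y) (hym : y < n + m) (hxy : p (x % m) = p (y % m)) : x = y := by
  have hmod : x ≡ y [MOD m] :=
    h.1 _ _ (Nat.mod_lt _ (by omega)) (Nat.mod_lt _ (by omega)) hxy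
  exact hmod.eq_of_abs_lt (by grind)

theorem IsCycleWith.length_le_of_solves_of_isolated (h : IsCycleWith G p m) (hm : 4 < m)
    {f : ℕ → ℕ} {b : ℕ} (hf : MonotoneOn f (Set.Iic b)) (hlt : ∀ j < b, f j < m)
    (hwrap : f b = f 0 + m) (hgap : ∀ j < b, (f (j + 1) - f j) % 3 ≠ 1) (hv : EdgesInVerts G')
    (hadj : ∀ x y, G'.Adj x y ↔ G.Adj x y ∧ ∀ j < b, x ≠ p (f j) ∧ y ≠ p (f j))
    {sA sB : Bool} {L : List Op} (hL : Solves sA sB L G') : m ≤ 3 * (L.length + b) := by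
  obtain ⟨P, hP, hcard, havoid⟩ := exists_isWindowPacking_of_gaps hf hgap
  rw [hwrap] at hP hcard
  have apply_ne : ∀ s ∈ P, ∀ i ≤ 3, ∀ j < b, p ((s + i) % m) ≠ p (f j) := by
    intro s hs i hi j hj heq
    have := hP.lt_start s hs
    have := hP.end_lt s hs
    have := havoid s hs j hj
    have := hlt j hj
    have := hf (Set.mem_Iic.2 b.zero_le) (Set.mem_Iic.2 hj.le) j.zero_le
    rw [← Nat.mod_eq_of_lt (hlt j hj)] at heq
    have := h.eq_of_apply_mod_eq (n := f 0) (by omega) (by omega) (by omega) (by omega) heq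
    omega
  have := h.card_packing_le_length_of_solves hm hP hv (fun x y hxy => ((hadj x y).1 hxy).1)
    (fun s hs i hi => (hadj _ _).2 ⟨h.adj_succ (by omega) (s + i), fun j hj =>
      ⟨apply_ne s hs i hi.le j hj, apply_ne s hs (i + 1) hi j hj⟩⟩) hL
  omega

end Cycle

theorem path_union_lower_bound_general {m b : ℕ} (hm : 4 < m) {G G' : BGraph} {p : ℕ → ℕ}
    (hcyc : IsCycleWith G p m) {idx : ℕ → ℕ}
    (hmono : ∀ i j, 1 ≤ i → i < j → j ≤ b → idx i < idx j)
    (hrange : ∀ j, 1 ≤ j → j ≤ b → idx j < m)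
    (hwrap : 1 ≤ b → idx (b + 1) = idx 1 + m)
    (hdiff : ∀ j, 1 ≤ j → j ≤ b → (idx (j + 1) - idx j) % 3 ≠ 1)
    (hA : G'.A = G.A) (hB : G'.B = G.B)
    (hadj : ∀ x y, G'.Adj x y ↔
      (G.Adj x y ∧ ∀ j, 1 ≤ j → j ≤ b → x ≠ p (idx j) ∧ y ≠ p (idx j)))
    {sA sB : Bool} {L : List Op} (hL : Solves sA sB L G') : m ≤ 3 * (L.length + b) := by
  rcases b.eq_zero_or_pos with rfl | hb
  · have hadj₀ : ∀ x y, G'.Adj x y ↔ G.Adj x y := fun x y =>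
      (hadj x y).trans (and_iff_left fun j hj hj0 => by omega)
    have hcyc' : IsCycleWith G' p m := by simpa only [IsCycleWith, hA, hB, hadj₀] using hcyc
    exact hcyc'.length_le_of_solves hm hL
  · have hmonoOn : MonotoneOn (fun j => idx (j + 1)) (Set.Iic b) := by
      intro i _ j hj hij
      rcases hij.eq_or_lt with rfl | hlt
      · exact le_rfl
      rcases (Set.mem_Iic.1 hj).eq_or_lt with rfl | hjb
      · exact ((hrange (i + 1) (by omega) hlt).le.trans (Nat.le_add_left m _)).trans_eq
          (hwrap hb).symm
      · exact (hmono (i + 1) (j + 1) (by omega) (by omega) hjb).le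
    have hv : EdgesInVerts G' :=
      hcyc.edgesInVerts.mono (fun x y hxy => ((hadj x y).1 hxy).1) (by rw [verts, verts, hA, hB])
    refine hcyc.length_le_of_solves_of_isolated hm hmonoOn (fun j hj => hrange _ (by omega) hj)
      (hwrap hb) (fun j hj => hdiff _ (by omega) hj) hv (fun x y => (hadj x y).trans ?_) hL
    refine and_congr_right' ⟨fun h j hj => h _ (by omega) hj, fun h j hj hjb => ?_⟩
    obtain ⟨i, rfl⟩ := Nat.exists_eq_add_of_le' hj
    exact h i hjb

/-- Let `k ≥ 1` and let `v_1, …, v_{6k}` be the consecutive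
vertices of a cycle of length `6k` (here `p i` is the paper's `v_{i+1}`,
indices modulo `6k`).  Let `idx 1 < … < idx b` be indices of vertices such
that all cyclic differences are congruent to `0` or `2` modulo `6`, and let
`G'` be obtained from the cycle by deleting, for each `j`, the two cycle
edges incident to the vertex `p (idx j)`.  Then transforming `G'` into a
disjoint union of bicliques requires at least `2k - b` operations. -/
theorem path_union_lower_bound (k b : ℕ) (hk : 1 ≤ k) (G G' : BGraph)
    (p : ℕ → ℕ) (hcyc : IsCycleWith G p (6 * k)) (idx : ℕ → ℕ)
    (hmono : ∀ i j, 1 ≤ i → i < j → j ≤ b → idx i < idx j)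
    (hrange : ∀ j, 1 ≤ j → j ≤ b → idx j < 6 * k)
    (hwrap : 1 ≤ b → idx (b + 1) = idx 1 + 6 * k)
    (hdiff : ∀ j, 1 ≤ j → j ≤ b →
      (idx (j + 1) - idx j) % 6 = 0 ∨ (idx (j + 1) - idx j) % 6 = 2)
    (hA : G'.A = G.A) (hB : G'.B = G.B)
    (hadj : ∀ x y, G'.Adj x y ↔
      (G.Adj x y ∧ ∀ j, 1 ≤ j → j ≤ b → x ≠ p (idx j) ∧ y ≠ p (idx j)))
    (L : List Op) (G'' : BGraph)
    (happ : ApplySeq true true L G' G'') (hbic : IsBicliqueUnion G'') :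
    2 * k - b ≤ L.length := by
  have := path_union_lower_bound_general (by omega) hcyc hmono hrange hwrap
    (fun j hj hjb => by have := hdiff j hj hjb; omega) hA hB hadj ⟨G'', happ, hbic⟩
  omega

end BCE
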